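/- arXiv:1206.1636 — 3 statements merged into one kernel-verified Lean document; each statement's English description precedes it below -/
import Mathlib

section
/- Let φ = (1+√5)/2 and let τ ∈ {−φ, −φ⁻¹, φ⁻², φ⁻¹, φ, φ²}. Then for every (a,b,c) ∈ 𝒯, the three cevian lengths p = f(a,b,c, 1/(1−τ)), q = f(b,c,a, 1 − 1/τ), r = f(c,a,b, τ) form a degenerate triangle: their squares satisfy p⁴ + q⁴ + r⁴ = 2(p²q² + q²r² + r²p²) (equivalently, one of p, q, r equals the sum of the other two). In particular, the triple (1/(1−τ), 1 − 1/τ, τ) does not belong to 𝔸. -/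
/-!
The cevian length satisfies `f a b c (1 - ρ) = f a c b ρ` and `f a b c (1 / ρ) = f c b a ρ / |ρ|`.
Composing these two symmetries, the cevians with parameters `1 / (1 - τ)`, `1 - 1 / τ`, `τ` have
lengths in the ratio `1 / |1 - τ| : 1 / |τ| : 1`, independently of the triangle. By Heron's
factorization this ratio is degenerate exactly when `τ ^ 2 + τ - 1`, `τ ^ 2 - τ - 1` or
`τ ^ 2 - 3 * τ + 1` vanishes (the fourth factor, `τ ^ 2 - τ + 1`, is positive), and the roots of
these quadratics are the six exceptional values.
-/

/-- The set of side-length triples of non-degenerate triangles. -/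
def T : Set (ℝ × ℝ × ℝ) :=
  {p | |p.1 - p.2.1| < p.2.2 ∧ p.2.2 < p.1 + p.2.1}

/-- The cevian length `f a b c ρ = AA_ρ`. -/
noncomputable def f (a b c ρ : ℝ) : ℝ :=
  Real.sqrt (ρ * (ρ - 1) * a ^ 2 + ρ * b ^ 2 + (1 - ρ) * c ^ 2)

/-- The set of parameter triples `(ρ, σ, τ)` for which the three cevians form a
triangle for every triangle. -/
def A : Set (ℝ × ℝ × ℝ) :=
  {p | ∀ a b c : ℝ, (a, b, c) ∈ T →
    (f a b c p.1, f b c a p.2.1, f c a b p.2.2) ∈ T}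

/-- The golden ratio. -/
noncomputable def phi : ℝ := (1 + Real.sqrt 5) / 2

/-- The triple `(p, q, r)` is, up to signs, the triple of side lengths of a degenerate triangle:
Heron's expression for `16 * area ^ 2` vanishes. -/
def IsDegenerateTriple {R : Type*} [CommRing R] (p q r : R) : Prop :=
  p ^ 4 + q ^ 4 + r ^ 4 = 2 * (p ^ 2 * q ^ 2 + q ^ 2 * r ^ 2 + r ^ 2 * p ^ 2)

theorem isDegenerateTriple_iff {R : Type*} [CommRing R] [NoZeroDivisors R] {p q r : R} :
    IsDegenerateTriple p q r ↔ p + q + r = 0 ∨ p = q + r ∨ q = r + p ∨ r = p + q := by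
  have heron : p ^ 4 + q ^ 4 + r ^ 4 - 2 * (p ^ 2 * q ^ 2 + q ^ 2 * r ^ 2 + r ^ 2 * p ^ 2) =
      (p + q + r) * ((p - (q + r)) * ((q - (r + p)) * (r - (p + q)))) := by
    ring
  rw [IsDegenerateTriple, ← sub_eq_zero, heron]
  simp only [mul_eq_zero, sub_eq_zero]

theorem IsDegenerateTriple.mul_left {R : Type*} [CommRing R] {p q r : R}
    (h : IsDegenerateTriple p q r) (k : R) : IsDegenerateTriple (k * p) (k * q) (k * r) := by
  unfold IsDegenerateTriple at h ⊢
  linear_combination k ^ 4 * h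

theorem isDegenerateTriple_abs_iff {R : Type*} [CommRing R] [LinearOrder R] [IsStrictOrderedRing R]
    {p q r : R} : IsDegenerateTriple |p| |q| |r| ↔ IsDegenerateTriple p q r := by
  have abs_pow_four (x : R) : |x| ^ 4 = x ^ 4 := Even.pow_abs (by decide) x
  simp only [IsDegenerateTriple, sq_abs, abs_pow_four]

theorem isDegenerateTriple_inv_one_sub_inv_one_iff {K : Type*} [Field K] [LinearOrder K]
    [IsStrictOrderedRing K] {t : K} (h0 : t ≠ 0) (h1 : t ≠ 1) :
    IsDegenerateTriple (1 - t)⁻¹ t⁻¹ 1 ↔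
      t ^ 2 + t - 1 = 0 ∨ t ^ 2 - t - 1 = 0 ∨ t ^ 2 - 3 * t + 1 = 0 := by
  have h1' : 1 - t ≠ 0 := sub_ne_zero.mpr h1.symm
  have hsum : (1 - t)⁻¹ + t⁻¹ + 1 = 0 ↔ t ^ 2 - t - 1 = 0 := by
    field_simp
    constructor <;> intro h <;> linear_combination -h
  have hleft : (1 - t)⁻¹ = t⁻¹ + 1 ↔ t ^ 2 + t - 1 = 0 := by
    field_simp
    constructor <;> intro h <;> linear_combination h
  have hmid : t⁻¹ = 1 + (1 - t)⁻¹ ↔ t ^ 2 - 3 * t + 1 = 0 := by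
    field_simp
    constructor <;> intro h <;> linear_combination h
  have hone : 1 ≠ (1 - t)⁻¹ + t⁻¹ := by
    intro h
    have hquad : t ^ 2 - t + 1 = 0 := by
      field_simp at h
      linear_combination -h
    nlinarith [sq_nonneg (2 * t - 1)]
  rw [isDegenerateTriple_iff, hsum, hleft, hmid]
  tauto

theorem IsDegenerateTriple.notMem_T {p q r : ℝ} (h : IsDegenerateTriple p q r) :
    (p, q, r) ∉ T := by
  rintro ⟨habs, hr⟩
  obtain ⟨hq, hp⟩ := abs_lt.mp habs
  dsimp only at hp hq hr
  rcases isDegenerateTriple_iff.mp h with h | h | h | h <;> linarith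

theorem f_one_sub (a b c ρ : ℝ) : f a b c (1 - ρ) = f a c b ρ := by
  unfold f
  congr 1
  ring

theorem f_one_div (a b c : ℝ) {ρ : ℝ} (hρ : ρ ≠ 0) : f a b c (1 / ρ) = f c b a ρ / |ρ| := by
  unfold f
  rw [← Real.sqrt_sq_eq_abs, ← Real.sqrt_div' _ (sq_nonneg ρ)]
  congr 1
  field_simp
  ring

theorem f_one_div_one_sub (a b c : ℝ) {τ : ℝ} (hτ : τ ≠ 1) :
    f a b c (1 / (1 - τ)) = f c a b τ / |1 - τ| := by
  rw [f_one_div a b c (sub_ne_zero.mpr hτ.symm), f_one_sub]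

theorem f_one_sub_one_div (a b c : ℝ) {τ : ℝ} (hτ : τ ≠ 0) :
    f b c a (1 - 1 / τ) = f c a b τ / |τ| := by
  rw [f_one_sub, f_one_div b a c hτ]

theorem isDegenerateTriple_f {τ : ℝ} (h0 : τ ≠ 0) (h1 : τ ≠ 1)
    (h : IsDegenerateTriple (1 - τ)⁻¹ τ⁻¹ 1) (a b c : ℝ) :
    IsDegenerateTriple (f a b c (1 / (1 - τ))) (f b c a (1 - 1 / τ)) (f c a b τ) := by
  have hratio := (isDegenerateTriple_abs_iff.mpr h).mul_left (f c a b τ)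
  rw [f_one_div_one_sub a b c h1, f_one_sub_one_div a b c h0]
  simpa only [abs_inv, abs_one, mul_one, ← div_eq_mul_inv] using hratio

theorem phi_sq : phi ^ 2 = phi + 1 := Real.goldenRatio_sq

theorem exceptional_iff_quadratic_eq_zero {τ : ℝ} :
    (τ = -phi ∨ τ = -phi⁻¹ ∨ τ = (phi ^ 2)⁻¹ ∨ τ = phi⁻¹ ∨ τ = phi ∨ τ = phi ^ 2) ↔
      τ ^ 2 + τ - 1 = 0 ∨ τ ^ 2 - τ - 1 = 0 ∨ τ ^ 2 - 3 * τ + 1 = 0 := by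
  have hinv : phi⁻¹ = phi - 1 :=
    inv_eq_of_mul_eq_one_right (by linear_combination phi_sq)
  have factor_neg_phi : τ ^ 2 + τ - 1 = (τ + phi) * (τ - phi⁻¹) := by
    rw [hinv]
    linear_combination phi_sq
  have factor_phi : τ ^ 2 - τ - 1 = (τ - phi) * (τ + phi⁻¹) := by
    rw [hinv]
    linear_combination phi_sq
  have factor_phi_sq : τ ^ 2 - 3 * τ + 1 = (τ - phi ^ 2) * (τ - (phi ^ 2)⁻¹) := by
    rw [← inv_pow, hinv]
    linear_combination (2 * τ - phi ^ 2 + phi - 1) * phi_sq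
  rw [factor_neg_phi, factor_phi, factor_phi_sq]
  simp only [mul_eq_zero, sub_eq_zero, add_eq_zero_iff_eq_neg]
  tauto

theorem degenerate_exceptional_points (τ : ℝ)
    (hτ : τ = -phi ∨ τ = -phi⁻¹ ∨ τ = (phi ^ 2)⁻¹ ∨ τ = phi⁻¹ ∨ τ = phi ∨
      τ = phi ^ 2) :
    (∀ a b c : ℝ, (a, b, c) ∈ T →
      (f a b c (1 / (1 - τ))) ^ 4 + (f b c a (1 - 1 / τ)) ^ 4 +
          (f c a b τ) ^ 4 =
        2 * ((f a b c (1 / (1 - τ))) ^ 2 * (f b c a (1 - 1 / τ)) ^ 2 +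
          (f b c a (1 - 1 / τ)) ^ 2 * (f c a b τ) ^ 2 +
          (f c a b τ) ^ 2 * (f a b c (1 / (1 - τ))) ^ 2)) ∧
    (1 / (1 - τ), 1 - 1 / τ, τ) ∉ A := by
  have hquad := exceptional_iff_quadratic_eq_zero.mp hτ
  have h0 : τ ≠ 0 := by
    rintro rfl
    norm_num at hquad
  have h1 : τ ≠ 1 := by
    rintro rfl
    norm_num at hquad
  have hdeg := isDegenerateTriple_f h0 h1
    ((isDegenerateTriple_inv_one_sub_inv_one_iff h0 h1).mpr hquad)
  have equilateral_mem : ((1 : ℝ), (1 : ℝ), (1 : ℝ)) ∈ T := by norm_num [T]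
  exact ⟨fun a b c _ => hdeg a b c, fun hA => (hdeg 1 1 1).notMem_T (hA 1 1 1 equilateral_mem)⟩
end

section
/- Let τ ∈ ℝ with τ ≠ 0 and τ ≠ 1. If (ρ,σ,τ) ∈ 𝔹, then (ρ,σ) is one of the five points (τ,τ), (−τ, 2−τ), (2−τ, τ−2), (2+τ, −τ), (1/(1−τ), 1 − 1/τ). -/
/-- The solution set of the three one-parameter families of limiting
inequalities. -/
def B : Set (ℝ × ℝ × ℝ) :=
  {p | ∀ t : ℝ, 0 < t →
    (abs (|p.1 * (t + 1) - 1| - |p.2.1 * t - t - 1|) ≤ |p.2.2 + t| ∧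
      |p.2.2 + t| ≤ |p.1 * (t + 1) - 1| + |p.2.1 * t - t - 1|) ∧
    (abs (|p.1 + t| - |p.2.1 * (t + 1) - 1|) ≤ |p.2.2 * t - t - 1| ∧
      |p.2.2 * t - t - 1| ≤ |p.1 + t| + |p.2.1 * (t + 1) - 1|) ∧
    (abs (|p.1 * t - t - 1| - |p.2.1 + t|) ≤ |p.2.2 * (t + 1) - 1| ∧
      |p.2.2 * (t + 1) - 1| ≤ |p.1 * t - t - 1| + |p.2.1 + t|)}

/-!
Up to signs, the three families are dehomogenizations of a single one: for `x + y + z = 0`, the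
numbers `|ρ x + z|`, `|σ y + x|`, `|τ z + y|` satisfy the triangle inequalities. The families are
the parts `(-(t + 1), t, 1)`, `(1, -(t + 1), t)`, `(t, 1, -(t + 1))` of the plane `x + y + z = 0`,
which together with `t = 0`, added by continuity, cover it up to scaling.

Choosing `(x, y, z)` so that one of the three forms vanishes makes the other two agree in absolute
value. With `u = ρ (1 - τ)`, `v = τ (1 - σ)`, `w = σ (1 - ρ)` this gives
`|u - 1| = |v - 1| = |w - 1|`. If `u = 1`, this is `P₀`; otherwise each choice of the signs in
`v - 1 = ± (u - 1)`, `w - 1 = ± (u - 1)` determines `ρ` and `σ`.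
-/

/-- The absolute values of `x`, `y`, `z` are the side lengths of a possibly degenerate triangle.
This is the relation by which the inequalities defining `B` link three functions of `t`, written
symmetrically in `x`, `y`, `z`. -/
def AbsTriangle {α : Type*} [AddCommGroup α] [LinearOrder α] (x y z : α) : Prop :=
  |x| ≤ |y| + |z| ∧ |y| ≤ |z| + |x| ∧ |z| ≤ |x| + |y|

namespace AbsTriangle

section Group

variable {α : Type*} [AddCommGroup α] [LinearOrder α] {x y z : α}

lemma rotate (h : AbsTriangle x y z) : AbsTriangle y z x :=
  ⟨h.2.1, h.2.2, h.1⟩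

lemma neg_left (h : AbsTriangle x y z) : AbsTriangle (-x) y z := by
  simpa only [AbsTriangle, abs_neg] using h

variable [IsOrderedAddMonoid α]

lemma iff_abs_sub_abs_le :
    AbsTriangle x y z ↔ abs (|x| - |y|) ≤ |z| ∧ |z| ≤ |x| + |y| := by
  rw [AbsTriangle, abs_sub_le_iff, sub_le_iff_le_add', sub_le_iff_le_add, and_assoc]

lemma abs_eq_abs_of_zero_right (h : AbsTriangle x y 0) : |x| = |y| := by
  simpa [sub_eq_zero] using (iff_abs_sub_abs_le.1 h).1

end Group

lemma mul_left {α : Type*} [Ring α] [LinearOrder α] [IsOrderedRing α] {x y z : α}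
    (h : AbsTriangle x y z) (c : α) : AbsTriangle (c * x) (c * y) (c * z) := by
  simp only [AbsTriangle, abs_mul, ← mul_add]
  exact ⟨mul_le_mul_of_nonneg_left h.1 (abs_nonneg c),
    mul_le_mul_of_nonneg_left h.2.1 (abs_nonneg c),
    mul_le_mul_of_nonneg_left h.2.2 (abs_nonneg c)⟩

lemma isClosed_setOf {X α : Type*} [TopologicalSpace X] [AddCommGroup α] [LinearOrder α]
    [IsOrderedAddMonoid α] [TopologicalSpace α] [OrderTopology α] {f g h : X → α}
    (hf : Continuous f) (hg : Continuous g) (hh : Continuous h) :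
    IsClosed {a | AbsTriangle (f a) (g a) (h a)} :=
  (isClosed_le hf.abs (hg.abs.add hh.abs)).inter <|
    (isClosed_le hg.abs (hh.abs.add hf.abs)).inter (isClosed_le hh.abs (hf.abs.add hg.abs))

end AbsTriangle

section InB

variable {ρ σ τ : ℝ}

lemma mem_B_iff_absTriangle :
    (ρ, σ, τ) ∈ B ↔ ∀ t : ℝ, 0 < t →
      AbsTriangle (ρ * (t + 1) - 1) (σ * t - t - 1) (τ + t) ∧
      AbsTriangle (ρ + t) (σ * (t + 1) - 1) (τ * t - t - 1) ∧
      AbsTriangle (ρ * t - t - 1) (σ + t) (τ * (t + 1) - 1) := by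
  simp only [B, Set.mem_ofPred_eq, AbsTriangle.iff_abs_sub_abs_le]

lemma rotate_mem_B (h : (ρ, σ, τ) ∈ B) : (σ, τ, ρ) ∈ B := by
  rw [mem_B_iff_absTriangle] at h ⊢
  intro t ht
  obtain ⟨h₁, h₂, h₃⟩ := h t ht
  exact ⟨h₂.rotate, h₃.rotate, h₁.rotate⟩

lemma absTriangle_of_mem_B_of_nonneg (h : (ρ, σ, τ) ∈ B) {t : ℝ} (ht : 0 ≤ t) :
    AbsTriangle (ρ * (t + 1) - 1) (σ * t - t - 1) (τ + t) := by
  have hclosed : IsClosed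
      {t : ℝ | AbsTriangle (ρ * (t + 1) - 1) (σ * t - t - 1) (τ + t)} :=
    AbsTriangle.isClosed_setOf (by fun_prop) (by fun_prop) (by fun_prop)
  have ht' : t ∈ closure (Set.Ioi 0) := by rwa [closure_Ioi]
  exact closure_minimal (fun s hs ↦ (mem_B_iff_absTriangle.1 h s hs).1) hclosed ht'

lemma absTriangle_of_mem_B_of_mul_nonneg (h : (ρ, σ, τ) ∈ B) {x y z : ℝ}
    (hsum : x + y + z = 0) (hz : z ≠ 0) (hyz : 0 ≤ y * z) :
    AbsTriangle (ρ * x + z) (σ * y + x) (τ * z + y) := by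
  obtain ⟨t, rfl⟩ : ∃ t, y = t * z := ⟨y / z, (div_mul_cancel₀ y hz).symm⟩
  have ht : 0 ≤ t := by
    rw [mul_assoc] at hyz
    exact nonneg_of_mul_nonneg_left hyz (mul_self_pos.2 hz)
  obtain rfl : x = -(t + 1) * z := by linear_combination hsum
  have hρ : z * -(ρ * (t + 1) - 1) = ρ * (-(t + 1) * z) + z := by ring
  have hσ : z * (σ * t - t - 1) = σ * (t * z) + -(t + 1) * z := by ring
  have hτ : z * (τ + t) = τ * z + t * z := by ring
  rw [← hρ, ← hσ, ← hτ]
  exact (absTriangle_of_mem_B_of_nonneg h ht).neg_left.mul_left z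

lemma absTriangle_of_mem_B (h : (ρ, σ, τ) ∈ B) {x y z : ℝ} (hsum : x + y + z = 0) :
    AbsTriangle (ρ * x + z) (σ * y + x) (τ * z + y) := by
  have hcover : (z ≠ 0 ∧ 0 ≤ y * z) ∨ (x ≠ 0 ∧ 0 ≤ z * x) ∨ (y ≠ 0 ∧ 0 ≤ x * y) ∨
      (x = 0 ∧ y = 0 ∧ z = 0) := by
    simp only [mul_nonneg_iff]
    grind
  rcases hcover with ⟨hz, hyz⟩ | ⟨hx, hzx⟩ | ⟨hy, hxy⟩ | ⟨rfl, rfl, rfl⟩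
  · exact absTriangle_of_mem_B_of_mul_nonneg h hsum hz hyz
  · exact (absTriangle_of_mem_B_of_mul_nonneg (rotate_mem_B h)
      (by linarith) hx hzx).rotate.rotate
  · exact (absTriangle_of_mem_B_of_mul_nonneg (rotate_mem_B (rotate_mem_B h))
      (by linarith) hy hxy).rotate
  · simp [AbsTriangle]

lemma abs_sub_one_eq_of_mem_B (h : (ρ, σ, τ) ∈ B) :
    |τ * (1 - σ) - 1| = |ρ * (1 - τ) - 1| := by
  have htri := absTriangle_of_mem_B h (x := τ - 1) (y := -τ) (z := 1) (by ring)
  rw [mul_one, add_neg_cancel] at htri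
  convert htri.abs_eq_abs_of_zero_right.symm using 1
  · exact congrArg abs (by ring)
  · rw [← abs_neg]
    exact congrArg abs (by ring)

end InB

lemma exists_eq_mul_of_abs_eq_abs {R : Type*} [Ring R] [LinearOrder R] [IsOrderedRing R]
    {a b : R} (h : |a| = |b|) : ∃ ε : R, (ε = 1 ∨ ε = -1) ∧ a = ε * b := by
  rcases abs_eq_abs.1 h with h | h
  · exact ⟨1, .inl rfl, by rw [h, one_mul]⟩
  · exact ⟨-1, .inr rfl, by rw [h, neg_one_mul]⟩

lemma eq_and_eq_of_sub_one_eq_mul {R : Type*} [CommRing R] [NoZeroDivisors R]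
    {ρ σ τ ε δ : R} (hu : ρ * (1 - τ) ≠ 1) (hε : ε ^ 2 = 1)
    (hv : τ * (1 - σ) - 1 = ε * (ρ * (1 - τ) - 1))
    (hw : σ * (1 - ρ) - 1 = δ * (ρ * (1 - τ) - 1)) :
    ρ = 1 - ε + ε * δ * τ ∧ σ = ε - δ + δ * τ := by
  have hρ : ρ = 1 - ε + ε * δ * τ := by
    refine mul_left_cancel₀ (sub_ne_zero.2 hu) ?_
    linear_combination ε * (τ * hw + (1 - ρ) * hv) + (1 - ρ) * (ρ * (1 - τ) - 1) * hε
  refine ⟨hρ, ?_⟩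
  linear_combination ε * hw - δ * hv + σ * ε * hρ - σ * (1 - δ * τ) * hε

theorem B_section_five_points (τ : ℝ) (h0 : τ ≠ 0) (h1 : τ ≠ 1)
    (ρ σ : ℝ) (h : (ρ, σ, τ) ∈ B) :
    (ρ, σ) = (τ, τ) ∨ (ρ, σ) = (-τ, 2 - τ) ∨ (ρ, σ) = (2 - τ, τ - 2) ∨
      (ρ, σ) = (2 + τ, -τ) ∨ (ρ, σ) = (1 / (1 - τ), 1 - 1 / τ) := by
  have huv := abs_sub_one_eq_of_mem_B h
  have huw := (abs_sub_one_eq_of_mem_B (rotate_mem_B h)).symm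
  by_cases hu : ρ * (1 - τ) = 1
  · have hv : τ * (1 - σ) = 1 := by simpa [hu, sub_eq_zero] using huv
    have hσ : 1 - σ = 1 / τ := eq_one_div_of_mul_eq_one_right hv
    have hρ : ρ = 1 / (1 - τ) := eq_one_div_of_mul_eq_one_left hu
    simp [hρ, ← hσ]
  · obtain ⟨ε, hε, hv⟩ := exists_eq_mul_of_abs_eq_abs huv
    obtain ⟨δ, hδ, hw⟩ := exists_eq_mul_of_abs_eq_abs huw
    obtain ⟨hρ, hσ⟩ := eq_and_eq_of_sub_one_eq_mul hu (sq_eq_one_iff.2 hε) hv hw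
    simp only [Prod.mk.injEq]
    rcases hε with rfl | rfl <;> rcases hδ with rfl | rfl <;> grind
end

section
/- A triple (ρ,σ,τ) ∈ ℝ³ belongs to 𝔸 if and only if the matrix M(ρ,σ,τ) maps the cone 𝒬 into itself, i.e. M(ρ,σ,τ)·𝒬 ⊆ 𝒬. -/
/-- The open cone: the interior, in the first octant, of the cone
`x² + y² + z² = 2(xy + yz + zx)`, as a set of vectors in `Fin 3 → ℝ`. -/
def Q : Set (Fin 3 → ℝ) :=
  {v | 0 < v 0 ∧ 0 < v 1 ∧ 0 < v 2 ∧
    (v 0) ^ 2 + (v 1) ^ 2 + (v 2) ^ 2 <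
      2 * (v 0 * v 1 + v 1 * v 2 + v 2 * v 0)}

/-- The matrix `M(ρ, σ, τ)`. -/
def M (ρ σ τ : ℝ) : Matrix (Fin 3) (Fin 3) ℝ :=
  !![ρ * (ρ - 1), ρ, 1 - ρ;
     1 - σ, σ * (σ - 1), σ;
     τ, 1 - τ, τ * (τ - 1)]

lemma mul_mul_pos_iff_of_add_pos {R : Type*} [Ring R] [LinearOrder R] [IsStrictOrderedRing R]
    {p q r : R} (hpq : 0 < p + q) (hqr : 0 < q + r) (hrp : 0 < r + p) :
    0 < p * q * r ↔ 0 < p ∧ 0 < q ∧ 0 < r := by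
  refine ⟨fun h => ?_, fun ⟨hp, hq, hr⟩ => mul_pos (mul_pos hp hq) hr⟩
  rcases mul_pos_iff.1 h with ⟨hmul, hr⟩ | ⟨hmul, hr⟩
  · rcases mul_pos_iff.1 hmul with ⟨hp, hq⟩ | ⟨hp, hq⟩
    · exact ⟨hp, hq, hr⟩
    · exact absurd (add_neg hp hq) hpq.asymm
  · rcases mul_neg_iff.1 hmul with ⟨-, hq⟩ | ⟨hp, -⟩
    · exact absurd (add_neg hq hr) hqr.asymm
    · exact absurd (add_neg hr hp) hrp.asymm

lemma heron_factorization {R : Type*} [CommRing R] (a b c : R) :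
    2 * (a ^ 2 * b ^ 2 + b ^ 2 * c ^ 2 + c ^ 2 * a ^ 2) -
        ((a ^ 2) ^ 2 + (b ^ 2) ^ 2 + (c ^ 2) ^ 2) =
      (a + b + c) * ((-a + b + c) * (a - b + c) * (a + b - c)) := by
  ring

lemma mem_T_iff {a b c : ℝ} :
    (a, b, c) ∈ T ↔ 0 < -a + b + c ∧ 0 < a - b + c ∧ 0 < a + b - c := by
  simp only [T, Set.mem_ofPred_eq, abs_lt]
  constructor
  · rintro ⟨⟨hb, ha⟩, hc⟩
    exact ⟨by linarith, by linarith, by linarith⟩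
  · rintro ⟨ha, hb, hc⟩
    exact ⟨⟨by linarith, by linarith⟩, by linarith⟩

lemma pos_of_mem_T {a b c : ℝ} (h : (a, b, c) ∈ T) : 0 < a ∧ 0 < b ∧ 0 < c := by
  obtain ⟨ha, hb, hc⟩ := mem_T_iff.1 h
  exact ⟨by linarith, by linarith, by linarith⟩

/-- The vector of squared sides, which carries triples as in `T` to vectors as in `Q`. -/
def sqVec (p : ℝ × ℝ × ℝ) : Fin 3 → ℝ :=
  ![p.1 ^ 2, p.2.1 ^ 2, p.2.2 ^ 2]

/-- The triple of square roots, a right inverse of `sqVec` on vectors with nonnegative entries;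
negative entries are sent to `0`. -/
noncomputable def sqrtTriple (v : Fin 3 → ℝ) : ℝ × ℝ × ℝ :=
  (√(v 0), √(v 1), √(v 2))

lemma sqVec_sqrtTriple {v : Fin 3 → ℝ} (hv : 0 ≤ v) : sqVec (sqrtTriple v) = v := by
  ext i
  fin_cases i <;> exact Real.sq_sqrt (hv _)

lemma pos_of_mem_Q {v : Fin 3 → ℝ} (hv : v ∈ Q) (i : Fin 3) : 0 < v i := by
  obtain ⟨h₀, h₁, h₂, -⟩ := hv
  fin_cases i <;> assumption

lemma sqVec_mem_Q_iff {a b c : ℝ} (ha : 0 < a) (hb : 0 < b) (hc : 0 < c) :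
    sqVec (a, b, c) ∈ Q ↔ (a, b, c) ∈ T := by
  calc sqVec (a, b, c) ∈ Q
    _ ↔ (a ^ 2) ^ 2 + (b ^ 2) ^ 2 + (c ^ 2) ^ 2 <
          2 * (a ^ 2 * b ^ 2 + b ^ 2 * c ^ 2 + c ^ 2 * a ^ 2) := by
      simp only [Q, sqVec, Set.mem_ofPred_eq, Matrix.cons_val, pow_pos ha, pow_pos hb, pow_pos hc,
        true_and]
    _ ↔ 0 < (-a + b + c) * (a - b + c) * (a + b - c) := by
      rw [← sub_pos, heron_factorization, mul_pos_iff_of_pos_left (by positivity)]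
    _ ↔ (a, b, c) ∈ T := by
      rw [mem_T_iff]
      exact mul_mul_pos_iff_of_add_pos (by linarith) (by linarith) (by linarith)

-- Both sides force `v` to be positive: `√` vanishes at nonpositive reals, and sides are positive.
lemma sqrtTriple_mem_T_iff {v : Fin 3 → ℝ} : sqrtTriple v ∈ T ↔ v ∈ Q := by
  have iff_of_pos (hv : ∀ i, 0 < v i) : sqrtTriple v ∈ T ↔ v ∈ Q := by
    have h := sqVec_mem_Q_iff (Real.sqrt_pos.2 (hv 0)) (Real.sqrt_pos.2 (hv 1))
      (Real.sqrt_pos.2 (hv 2))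
    rwa [← sqrtTriple, sqVec_sqrtTriple fun i => (hv i).le, Iff.comm] at h
  refine ⟨fun h => (iff_of_pos fun i => ?_).1 h, fun h => (iff_of_pos (pos_of_mem_Q h)).2 h⟩
  obtain ⟨h₀, h₁, h₂⟩ := pos_of_mem_T h
  fin_cases i <;> exact Real.sqrt_pos.1 ‹_›

lemma image_sqVec_T : sqVec '' T = Q := by
  refine Set.Subset.antisymm ?_ fun v hv =>
    ⟨sqrtTriple v, sqrtTriple_mem_T_iff.2 hv, sqVec_sqrtTriple fun i => (pos_of_mem_Q hv i).le⟩
  rintro _ ⟨⟨a, b, c⟩, h, rfl⟩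
  obtain ⟨ha, hb, hc⟩ := pos_of_mem_T h
  exact (sqVec_mem_Q_iff ha hb hc).2 h

lemma forall_sqrtTriple_mem_T_iff_mapsTo (F : (Fin 3 → ℝ) → Fin 3 → ℝ) :
    (∀ p ∈ T, sqrtTriple (F (sqVec p)) ∈ T) ↔ Set.MapsTo F Q Q := by
  calc (∀ p ∈ T, sqrtTriple (F (sqVec p)) ∈ T)
    _ ↔ Set.MapsTo (F ∘ sqVec) T Q := forall₂_congr fun _ _ => sqrtTriple_mem_T_iff
    _ ↔ Set.MapsTo F (sqVec '' T) Q := Set.mapsTo_image_iff.symm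
    _ ↔ Set.MapsTo F Q Q := by rw [image_sqVec_T]

lemma sqrtTriple_M_mulVec_sqVec (a b c ρ σ τ : ℝ) :
    sqrtTriple ((M ρ σ τ).mulVec (sqVec (a, b, c))) = (f a b c ρ, f b c a σ, f c a b τ) := by
  simp only [sqrtTriple, M, sqVec, f, Matrix.mulVec, dotProduct, Fin.sum_univ_three,
    Matrix.of_apply, Matrix.cons_val]
  congr 3 <;> ring

theorem mem_A_iff_cone_invariant (ρ σ τ : ℝ) :
    (ρ, σ, τ) ∈ A ↔ (M ρ σ τ).mulVec '' Q ⊆ Q := by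
  calc (ρ, σ, τ) ∈ A
    _ ↔ ∀ p ∈ T, sqrtTriple ((M ρ σ τ).mulVec (sqVec p)) ∈ T := by
      simp only [A, Set.mem_ofPred_eq, Prod.forall, sqrtTriple_M_mulVec_sqVec]
    _ ↔ Set.MapsTo (M ρ σ τ).mulVec Q Q := forall_sqrtTriple_mem_T_iff_mapsTo _
    _ ↔ (M ρ σ τ).mulVec '' Q ⊆ Q := Set.mapsTo_iff_image_subset
end
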